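/- Let p be a prime and let B be a uniformly random full-rank matrix in Mat_{n×(n−b)}(F_p) (b ≤ n), and let B' be its upper (n−a) × (n−b) submatrix. Then ℙ(rank(B') = n−c) = p^{−(c−a)(c−b)} · [a choose c−b]_{1/p} · [n−a choose n−c]_{1/p} / [n choose n−b]_{1/p}, where [k choose ℓ]_{q} = (q;q)_k / ((q;q)_ℓ (q;q)_{k−ℓ}) is the Gaussian binomial coefficient with (q;q)_m = Π_{i=1}^{m}(1−qⁱ), and the probability is 0 unless a, b ≤ c ≤ a + b. -/

import Mathlib

/-!
Only the rows of `B` matter: the rank of `B` is the dimension of the span of its rows. Fix a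
subspace `W` of `V = F_p^m` with `dim W = r` and count the `a`-tuples `v` of vectors of `V` such that
`W + span v` has dimension `s`. Conditioning on the first vector, which lies in `W` (`p^r` choices,
leaving `r` unchanged) or not (`p^m - p^r` choices, raising `r` by one), gives the recursion
`G(a+1, r) = p^r G(a, r) + (p^m - p^r) G(a, r+1)`. Its solution (`closedCount`) is checked by
induction on `a`, in `closedCount_succ` and `extCount_eq`.

A full-rank `B` with corner of rank `r = n - c` is an `(n-a)`-tuple spanning a subspace `W` of
dimension `r` followed by an `a`-tuple extending `W` to the whole space, so the number of such `B`
is a product of two of these counts; the number of full-rank `B` is a third one. All boundary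
cases are absorbed by `invPoch`, the reciprocal of `(q;q)_m` extended by `0` to `m < 0`, which
satisfies `1/(q;q)_{m-1} = (1 - q^m)/(q;q)_m` for every integer `m`.
-/

/-- The `q`-Pochhammer symbol `(q;q)_m = Π_{i=1}^m (1−qⁱ)` for an integer index, equal
to `1` when `m ≤ 0`. -/
noncomputable def qPochInt (q : ℝ) (m : ℤ) : ℝ :=
  ∏ i ∈ Finset.range m.toNat, (1 - q ^ (i + 1))

/-- The Gaussian binomial coefficient `[k choose ℓ]_q = (q;q)_k/((q;q)_ℓ (q;q)_{k−ℓ})`,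
with the convention that it is `0` unless `0 ≤ ℓ ≤ k` (i.e. `1/(q;q)_m = 0` for
`m < 0`). -/
noncomputable def qBinomInt (q : ℝ) (k ℓ : ℤ) : ℝ :=
  if 0 ≤ ℓ ∧ ℓ ≤ k then qPochInt q k / (qPochInt q ℓ * qPochInt q (k - ℓ)) else 0

open Module Submodule

/-! ### The reciprocal `q`-Pochhammer symbol and the closed form -/

/-- `1/(q;q)_m`, extended by `0` to negative `m`. -/
noncomputable def invPoch (q : ℝ) (m : ℤ) : ℝ :=
  if 0 ≤ m then (qPochInt q m)⁻¹ else 0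

theorem qPochInt_zero (q : ℝ) : qPochInt q 0 = 1 := by simp [qPochInt]

theorem invPoch_zero (q : ℝ) : invPoch q 0 = 1 := by simp [invPoch, qPochInt_zero]

theorem invPoch_of_neg (q : ℝ) {m : ℤ} (h : m < 0) : invPoch q m = 0 := by
  simp [invPoch, h]

theorem qPochInt_pos {q : ℝ} (h0 : 0 < q) (h1 : q < 1) (m : ℤ) : 0 < qPochInt q m :=
  Finset.prod_pos fun _ _ => sub_pos.2 (pow_lt_one₀ h0.le h1 (Nat.succ_ne_zero _))

theorem qPochInt_mul_invPoch {q : ℝ} (h0 : 0 < q) (h1 : q < 1) {m : ℤ} (hm : 0 ≤ m) :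
    qPochInt q m * invPoch q m = 1 := by
  rw [invPoch, if_pos hm, mul_inv_cancel₀ (qPochInt_pos h0 h1 m).ne']

theorem qPochInt_succ (q : ℝ) {m : ℤ} (hm : 0 ≤ m) :
    qPochInt q (m + 1) = qPochInt q m * (1 - q ^ (m + 1)) := by
  lift m to ℕ using hm
  have : ((m : ℤ) + 1).toNat = m + 1 := by omega
  rw [qPochInt, this, Finset.prod_range_succ, qPochInt, Int.toNat_natCast]
  norm_cast

theorem invPoch_pred {q : ℝ} (h0 : 0 < q) (h1 : q < 1) (m : ℤ) :
    invPoch q (m - 1) = (1 - q ^ m) * invPoch q m := by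
  rcases lt_trichotomy m 0 with h | rfl | h
  · rw [invPoch_of_neg q h, invPoch_of_neg q (by omega), mul_zero]
  · rw [invPoch_of_neg q (by omega)]; simp
  · obtain ⟨k, rfl⟩ : ∃ k, m = k + 1 := ⟨m - 1, by ring⟩
    have hk : 0 ≤ k := by omega
    have hs := qPochInt_succ q hk
    have p1 := (qPochInt_pos h0 h1 (k + 1)).ne'
    have p2 := (qPochInt_pos h0 h1 k).ne'
    rw [add_sub_cancel_right, invPoch, invPoch, if_pos hk, if_pos (by omega)]
    field_simp
    rw [hs]

theorem qBinomInt_eq (q : ℝ) (k l : ℤ) :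
    qBinomInt q k l = qPochInt q k * invPoch q l * invPoch q (k - l) := by
  unfold qBinomInt invPoch
  by_cases h : 0 ≤ l <;> by_cases h' : l ≤ k <;> simp [h, h']
  rw [div_eq_mul_inv, mul_inv]; ring

/-- The number of `a`-tuples of vectors of `F_p^m` that extend a given `r`-dimensional subspace to
one of dimension `s`. -/
noncomputable def closedCount (p : ℝ) (m a r s : ℤ) : ℝ :=
  p ^ (r * a + (a + (m - r)) * (s - r) - (s - r) ^ 2) * qPochInt (1 / p) a *
    qPochInt (1 / p) (m - r) * invPoch (1 / p) (a - (s - r)) *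
    invPoch (1 / p) (m - s) * invPoch (1 / p) (s - r)

theorem closedCount_zero {p : ℝ} (hp : 1 < p) {m r s : ℤ} (hr : r ≤ m) :
    closedCount p m 0 r s = if r = s then 1 else 0 := by
  have h0 : 0 < 1 / p := by positivity
  have h1 : 1 / p < 1 := by rw [div_lt_one (by positivity)]; exact hp
  unfold closedCount
  split_ifs with h
  · subst h
    have := qPochInt_mul_invPoch h0 h1 (sub_nonneg.2 hr)
    simp [invPoch_zero, qPochInt_zero, -one_div, this]
  · rcases lt_or_gt_of_ne h with h | h
    · rw [invPoch_of_neg _ (show 0 - (s - r) < 0 by omega)]; ring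
    · rw [invPoch_of_neg _ (show s - r < 0 by omega)]; ring

/-- The recursion satisfied by the counts of tuples, obtained by conditioning on the first vector. -/
theorem closedCount_succ {p : ℝ} (hp : 1 < p) {m a r s : ℤ} (ha : 0 ≤ a) (hr : r ≤ m) :
    closedCount p m (a + 1) r s =
      p ^ r * closedCount p m a r s + (p ^ m - p ^ r) * closedCount p m a (r + 1) s := by
  have hp0 : p ≠ 0 := by positivity
  have h0 : 0 < 1 / p := by positivity
  have h1 : 1 / p < 1 := by rw [div_lt_one (by positivity)]; exact hp
  have hq (k : ℤ) : (1 / p) ^ k = p ^ (-k) := by rw [one_div, inv_zpow, zpow_neg]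
  obtain ⟨k, rfl⟩ : ∃ k, s = r + k := ⟨s - r, by ring⟩
  obtain ⟨d, rfl⟩ : ∃ d, m = r + d := ⟨m - r, by ring⟩
  have hd : 0 ≤ d := by omega
  -- For `d = 0` both sides vanish: the left through `p^m - p^r`, the right through `1 - q^k`.
  have e1 : (p ^ (r + d) - p ^ r) * qPochInt (1 / p) (d - 1) * invPoch (1 / p) (d - k) *
        invPoch (1 / p) (k - 1) =
      p ^ (r + d) * qPochInt (1 / p) d * invPoch (1 / p) (d - k) *
        ((1 - p ^ (-k)) * invPoch (1 / p) k) := by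
    rw [invPoch_pred h0 h1, hq]
    rcases hd.eq_or_lt with rfl | hd
    · rcases lt_trichotomy k 0 with h | rfl | h
      · rw [invPoch_of_neg _ h]; simp
      · simp
      · rw [invPoch_of_neg _ (show 0 - k < 0 by omega)]; simp
    · have h := qPochInt_succ (1 / p) (show 0 ≤ d - 1 by omega)
      rw [sub_add_cancel, hq] at h
      have h' : p ^ (r + d) * (1 - p ^ (-d)) = p ^ (r + d) - p ^ r := by
        rw [mul_sub, ← zpow_add₀ hp0]; simp
      rw [h, ← h']; ring
  have e2 : qPochInt (1 / p) (a + 1) = qPochInt (1 / p) a * (1 - p ^ (-(a + 1))) := by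
    rw [qPochInt_succ _ ha, hq]
  have e3 : invPoch (1 / p) (a - k) =
      (1 - p ^ (-(a + 1 - k))) * invPoch (1 / p) (a + 1 - k) := by
    rw [← hq, ← invPoch_pred h0 h1]; congr 1; ring
  unfold closedCount
  rw [show r + k - r = k by ring, show r + d - r = d by ring, show r + d - (r + k) = d - k by ring,
    show r + k - (r + 1) = k - 1 by ring, show r + d - (r + 1) = d - 1 by ring,
    show a - (k - 1) = a + 1 - k by ring, e2, e3]
  have x1 : p ^ r * p ^ (r * a + (a + d) * k - k ^ 2) =
      p ^ (r * (a + 1) + (a + 1 + d) * k - k ^ 2) * p ^ (-k) := by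
    rw [← zpow_add₀ hp0, ← zpow_add₀ hp0]; congr 1; ring
  have x2 : p ^ ((r + 1) * a + (a + (d - 1)) * (k - 1) - (k - 1) ^ 2) * p ^ (r + d) =
      p ^ (r * (a + 1) + (a + 1 + d) * k - k ^ 2) := by
    rw [← zpow_add₀ hp0]; congr 1; ring
  have x3 : p ^ (-k) * p ^ (-(a + 1 - k)) = p ^ (-(a + 1)) := by
    rw [← zpow_add₀ hp0]; congr 1; ring
  linear_combination
    (-p ^ ((r + 1) * a + (a + (d - 1)) * (k - 1) - (k - 1) ^ 2) * qPochInt (1 / p) a *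
      invPoch (1 / p) (a + 1 - k)) * e1
    - (qPochInt (1 / p) a * qPochInt (1 / p) d * (1 - p ^ (-(a + 1 - k))) *
      invPoch (1 / p) (a + 1 - k) * invPoch (1 / p) (d - k) * invPoch (1 / p) k) * x1
    - (qPochInt (1 / p) a * qPochInt (1 / p) d * (1 - p ^ (-k)) *
      invPoch (1 / p) (a + 1 - k) * invPoch (1 / p) (d - k) * invPoch (1 / p) k) * x2
    + (p ^ (r * (a + 1) + (a + 1 + d) * k - k ^ 2) * qPochInt (1 / p) a * qPochInt (1 / p) d *
      invPoch (1 / p) (a + 1 - k) * invPoch (1 / p) (d - k) * invPoch (1 / p) k) * x3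

/-! ### Counting tuples by the dimension they span -/

theorem finrank_sup_span_singleton_of_notMem {K V : Type*} [Field K] [AddCommGroup V]
    [Module K V] [FiniteDimensional K V] (W : Submodule K V) {x : V} (hx : x ∉ W) :
    finrank K ↥(W ⊔ span K {x}) = finrank K W + 1 := by
  have hx0 : x ≠ 0 := fun h => hx (h ▸ W.zero_mem)
  have h := Submodule.finrank_sup_add_finrank_inf_eq W (span K {x})
  have hd : W ⊓ span K {x} = ⊥ := (disjoint_span_singleton_of_notMem hx).eq_bot
  rwa [hd, finrank_bot, finrank_span_singleton hx0, add_zero] at h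

open Classical in
/-- The number of `a`-tuples of vectors of `V` which together with the subspace `W` span a subspace
of dimension `s`. -/
noncomputable def extCount {K V : Type*} [Field K] [AddCommGroup V] [Module K V] [Fintype V]
    (a : ℕ) (W : Submodule K V) (s : ℕ) : ℝ :=
  ∑ v : Fin a → V, if finrank K ↥(W ⊔ span K (Set.range v)) = s then 1 else 0

theorem extCount_succ {K V : Type*} [Field K] [AddCommGroup V] [Module K V] [Fintype V]
    (a : ℕ) (W : Submodule K V) (s : ℕ) :
    extCount (a + 1) W s = ∑ x : V, extCount a (W ⊔ span K {x}) s := by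
  unfold extCount
  rw [← Fintype.sum_prod_type', ← (Fin.consEquiv fun _ => V).sum_comp]
  refine Finset.sum_congr rfl fun x _ => ?_
  have : Set.range (Fin.consEquiv (fun _ => V) x) = {x.1} ∪ Set.range x.2 := by
    exact (Fin.range_cons x.1 x.2).trans (Set.insert_eq _ _)
  rw [this, span_union, sup_assoc]

/-- The count depends only on dimensions. Among the choices `x` of the first vector, those in `W`
leave the dimension unchanged and all others raise it by one. -/
theorem extCount_eq {p : ℕ} [Fact p.Prime] {V : Type*} [AddCommGroup V] [Module (ZMod p) V]
    [Fintype V] (a : ℕ) (W : Submodule (ZMod p) V) (s : ℕ) :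
    extCount a W s = closedCount p (finrank (ZMod p) V) a (finrank (ZMod p) W) s := by
  have hp : (1 : ℝ) < p := by exact_mod_cast (Fact.out : p.Prime).one_lt
  have hle (W : Submodule (ZMod p) V) : (finrank (ZMod p) W : ℤ) ≤ finrank (ZMod p) V := by
    exact_mod_cast W.finrank_le
  induction a generalizing W with
  | zero =>
    rw [Nat.cast_zero, closedCount_zero hp (hle W)]
    rw [extCount, Fintype.sum_unique, Set.range_eq_empty, span_empty, sup_bot_eq]
    norm_cast
  | succ a ih =>
    classical
    have hW : (Finset.univ.filter (· ∈ W)).card = p ^ finrank (ZMod p) W := by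
      rw [← Fintype.card_subtype, Module.card_eq_pow_finrank (K := ZMod p), ZMod.card]
    have hV : Fintype.card V = p ^ finrank (ZMod p) V := by
      rw [Module.card_eq_pow_finrank (K := ZMod p), ZMod.card]
    have hWc : ((Finset.univ.filter (· ∉ W)).card : ℝ) =
        p ^ finrank (ZMod p) V - p ^ finrank (ZMod p) W := by
      rw [eq_sub_iff_add_eq]
      have := Finset.card_filter_add_card_filter_not (s := (Finset.univ : Finset V)) (· ∈ W)
      rw [Finset.card_univ, hV, hW] at this
      rw [← Nat.cast_pow p (finrank (ZMod p) V), ← this]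
      push_cast; ring
    rw [extCount_succ, Nat.cast_succ, closedCount_succ hp (by positivity) (hle W),
      ← Finset.sum_filter_add_sum_filter_not _ (· ∈ W)]
    congr 1
    · rw [Finset.sum_congr rfl (g := fun _ =>
        closedCount p (finrank (ZMod p) V) a (finrank (ZMod p) W) s), Finset.sum_const, hW,
        nsmul_eq_mul]
      · push_cast; rfl
      · intro x hx
        rw [ih, sup_eq_left.2 ((span_singleton_le_iff_mem _ _).2 (Finset.mem_filter.1 hx).2)]
    · rw [Finset.sum_congr rfl (g := fun _ =>
        closedCount p (finrank (ZMod p) V) a (finrank (ZMod p) W + 1) s), Finset.sum_const,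
        nsmul_eq_mul, hWc]
      · norm_cast
      · intro x hx
        rw [ih, finrank_sup_span_singleton_of_notMem W (Finset.mem_filter.1 hx).2, Nat.cast_succ]

/-! ### Back to matrices -/

theorem card_rank_eq (p : ℕ) [Fact p.Prime] (n m s : ℕ) :
    (Nat.card {B : Matrix (Fin n) (Fin m) (ZMod p) // B.rank = s} : ℝ) =
      closedCount p m n 0 s := by
  classical
  have h := extCount_eq (p := p) (V := Fin m → ZMod p) n ⊥ s
  rw [finrank_bot, Module.finrank_fin_fun, Nat.cast_zero] at h
  rw [← h, Nat.card_eq_fintype_card, Fintype.card_subtype, Finset.card_filter, extCount]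
  push_cast
  refine Finset.sum_congr rfl fun B _ => ?_
  rw [Matrix.rank_eq_finrank_span_row, bot_sup_eq]
  rfl

/-- The top `N` rows form a tuple spanning a subspace of dimension `r`, and the remaining `a` rows
extend that subspace, whichever it is, to one of dimension `s`. -/
theorem card_rank_and_corner_eq (p : ℕ) [Fact p.Prime] (N a n m r s : ℕ) (hn : N + a = n)
    (hN : N ≤ n) :
    (Nat.card {B : Matrix (Fin n) (Fin m) (ZMod p) //
        B.rank = s ∧ (B.submatrix (Fin.castLE hN) id).rank = r} : ℝ) =
      closedCount p m N 0 r * closedCount p m a r s := by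
  classical
  subst hn
  have h := extCount_eq (p := p) (V := Fin m → ZMod p) N ⊥ r
  rw [finrank_bot, Module.finrank_fin_fun, Nat.cast_zero] at h
  rw [← h, Nat.card_eq_fintype_card, Fintype.card_subtype, Finset.card_filter, extCount,
    Finset.sum_mul]
  push_cast
  -- Splitting off the top `N` rows; a matrix is used here as the family of its rows.
  refine ((Fin.appendEquiv N a (α := Fin m → ZMod p)).sum_comp _).symm.trans ?_
  rw [Fintype.sum_prod_type]
  have h_top (u : Fin N → Fin m → ZMod p) (v : Fin a → Fin m → ZMod p) :
      (Matrix.submatrix (Fin.appendEquiv N a (u, v) : Matrix (Fin (N + a)) (Fin m) (ZMod p))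
        (Fin.castLE hN) id).rank = finrank (ZMod p) (span (ZMod p) (Set.range u)) := by
    refine (Matrix.rank_eq_finrank_span_row _).trans ?_
    have : Matrix.row (Matrix.submatrix (Fin.appendEquiv N a (u, v) :
        Matrix (Fin (N + a)) (Fin m) (ZMod p)) (Fin.castLE hN) id) = u :=
      funext fun i => Fin.append_left u v i
    rw [this]
  have h_all (u : Fin N → Fin m → ZMod p) (v : Fin a → Fin m → ZMod p) :
      Matrix.rank (Fin.appendEquiv N a (u, v) : Matrix (Fin (N + a)) (Fin m) (ZMod p)) =
        finrank (ZMod p)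
          ↥(span (ZMod p) (Set.range u) ⊔ span (ZMod p) (Set.range v)) := by
    refine (Matrix.rank_eq_finrank_span_row _).trans ?_
    have : Set.range (Matrix.row (Fin.appendEquiv N a (u, v))) = Set.range u ∪ Set.range v := by
        ext x
        constructor
        · rintro ⟨i, rfl⟩
          refine Fin.addCases (fun i => ?_) (fun i => ?_) i
          · exact Or.inl ⟨i, (Fin.append_left u v i).symm⟩
          · exact Or.inr ⟨i, (Fin.append_right u v i).symm⟩
        · rintro (⟨i, rfl⟩ | ⟨i, rfl⟩)
          · exact ⟨_, Fin.append_left u v i⟩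
          · exact ⟨_, Fin.append_right u v i⟩
    rw [← span_union, ← this]
  refine Finset.sum_congr rfl fun u _ => ?_
  rw [show (⊥ ⊔ span (ZMod p) (Set.range u)) = span (ZMod p) (Set.range u) from bot_sup_eq _]
  simp only [h_top, h_all]
  split_ifs with hu
  · have h' := extCount_eq (p := p) (V := Fin m → ZMod p) a (span (ZMod p) (Set.range u)) s
    rw [Module.finrank_fin_fun, hu] at h'
    rw [one_mul, ← h', extCount]
    simp only [hu, and_true]
  · simp [hu]

/-- Let `B` be a uniformly random full-rank matrix in `Mat_{n×(n−b)}(F_p)` and `B'` its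
upper `(n−a) × (n−b)` submatrix. Then
`ℙ(rank B' = n−c) = p^{−(c−a)(c−b)} [a, c−b]_{1/p} [n−a, n−c]_{1/p} / [n, n−b]_{1/p}`,
which vanishes unless `a, b ≤ c ≤ a + b`. -/
theorem rank_of_corner_of_full_rank_matrix (p : ℕ) [Fact p.Prime]
    (n a b c : ℕ) (ha : a ≤ n) (hb : b ≤ n) (hc : c ≤ n) :
    (Nat.card {B : Matrix (Fin n) (Fin (n - b)) (ZMod p) //
        B.rank = n - b ∧ (B.submatrix (Fin.castLE (Nat.sub_le n a)) id).rank = n - c} : ℝ) /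
      (Nat.card {B : Matrix (Fin n) (Fin (n - b)) (ZMod p) // B.rank = n - b} : ℝ) =
    (p : ℝ) ^ (-(((c : ℤ) - a) * ((c : ℤ) - b))) *
      qBinomInt (1 / p) a ((c : ℤ) - b) * qBinomInt (1 / p) ((n : ℤ) - a) ((n : ℤ) - c) /
        qBinomInt (1 / p) n ((n : ℤ) - b) := by
  have hp : (1 : ℝ) < p := by exact_mod_cast (Fact.out : p.Prime).one_lt
  have hp0 : (p : ℝ) ≠ 0 := by positivity
  have h0 : 0 < 1 / (p : ℝ) := by positivity
  have h1 : 1 / (p : ℝ) < 1 := by rw [div_lt_one (by positivity)]; exact hp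
  rw [card_rank_and_corner_eq p (n - a) a n (n - b) (n - c) (n - b) (by omega), card_rank_eq]
  simp only [qBinomInt_eq, closedCount, Nat.cast_sub ha, Nat.cast_sub hb, Nat.cast_sub hc]
  have hbn : (b : ℤ) ≤ n := by exact_mod_cast hb
  have hPm := qPochInt_mul_invPoch h0 h1 (sub_nonneg.2 hbn)
  have hPb := qPochInt_mul_invPoch h0 h1 (Int.natCast_nonneg b)
  -- `c - b` is the codimension of the row span of the corner; both sides vanish if it is negative.
  have hPc : qPochInt (1 / p) ((c : ℤ) - b) * invPoch (1 / p) ((c : ℤ) - b) *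
      invPoch (1 / p) ((c : ℤ) - b) = invPoch (1 / p) ((c : ℤ) - b) := by
    rcases le_or_gt 0 ((c : ℤ) - b) with h | h
    · rw [qPochInt_mul_invPoch h0 h1 h, one_mul]
    · rw [invPoch_of_neg _ h, mul_zero]
  have hPn := (qPochInt_pos h0 h1 n).ne'
  have hPm' := (qPochInt_pos h0 h1 ((n : ℤ) - b)).ne'
  have hIm : invPoch (1 / p) ((n : ℤ) - b) ≠ 0 := right_ne_zero_of_mul_eq_one hPm
  have hIb : invPoch (1 / (p : ℝ)) (b : ℤ) ≠ 0 := right_ne_zero_of_mul_eq_one hPb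
  have i1 : (n : ℤ) - b - (n - c) = c - b := by ring
  have i2 : (n : ℤ) - a - (n - c) = c - a := by ring
  have i3 : (n : ℤ) - (n - b) = b := by ring
  simp only [sub_zero, sub_self, i1, i2, i3, invPoch_zero]
  generalize qPochInt (1 / p) ((c : ℤ) - b) = Pc at *
  generalize invPoch (1 / p) ((c : ℤ) - b) = Ic at *
  have hE : (p : ℝ) ^ (0 * ((n : ℤ) - a) + (n - a + (n - b)) * (n - c) - (n - c) ^ 2) *
      (p : ℝ) ^ (((n : ℤ) - c) * a + (a + (c - b)) * (c - b) - (c - b) ^ 2) =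
      (p : ℝ) ^ (-(((c : ℤ) - a) * ((c : ℤ) - b))) *
        (p : ℝ) ^ (0 * (n : ℤ) + (n + (n - b)) * (n - b) - (n - b) ^ 2) := by
    rw [← zpow_add₀ hp0, ← zpow_add₀ hp0]; congr 1; ring
  rw [div_eq_div_iff (by positivity) (by positivity)]
  let K : ℝ := qPochInt (1 / p) (n - a) * qPochInt (1 / p) (n - b) * invPoch (1 / p) (c - a) *
    invPoch (1 / p) (n - c) * qPochInt (1 / p) a * invPoch (1 / p) (a - (c - b)) *
    qPochInt (1 / p) n * invPoch (1 / p) (n - b) * invPoch (1 / p) b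
  linear_combination (K * p ^ (0 * ((n : ℤ) - a) + (n - a + (n - b)) * (n - c) - (n - c) ^ 2) *
      p ^ (((n : ℤ) - c) * a + (a + (c - b)) * (c - b) - (c - b) ^ 2)) * hPc + K * Ic * hE
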